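/- There exists a constant κ₂ > 0 such that, defining for admissible u₁, u₂ : [0,1] → ℂ the functional J(u₁,u₂) = ∫₀¹ |u₁'(x) − u₂'(x)|² dx − Re ∫₀¹ u₁(x) u₂(x) (conj(u₁(x)) − conj(u₂(x)))² dx + κ₂ (Φ(u₁) + Φ(u₂)) ∫₀¹ |u₁(x) − u₂(x)|² dx, one has the lower bound J(u₁,u₂) ≥ ∫₀¹ |u₁'(x) − u₂'(x)|² dx + (1/2) κ₂ (Φ(u₁) + Φ(u₂)) ∫₀¹ |u₁(x) − u₂(x)|² dx for all admissible u₁, u₂. -/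

import Mathlib

open MeasureTheory intervalIntegral

/-- A function `u : [0,1] → ℂ` is admissible if it is continuously differentiable
(with derivative `u'`) and satisfies the Dirichlet boundary conditions
`u 0 = 0`, `u 1 = 0`. -/
def Admissible (u u' : ℝ → ℂ) : Prop :=
  (∀ x ∈ Set.Icc (0:ℝ) 1, HasDerivAt u (u' x) x) ∧
    ContinuousOn u' (Set.Icc (0:ℝ) 1) ∧ u 0 = 0 ∧ u 1 = 0

/-- The Lyapunov functional
`Φ(u) = ‖u'‖₂² − (1/2)‖u‖₄⁴ + κ(‖u‖₂²)³ + κ(‖u‖₂²)⁹`. -/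
noncomputable def Phi (κ : ℝ) (u u' : ℝ → ℂ) : ℝ :=
  (∫ x in (0:ℝ)..1, ‖u' x‖ ^ 2) - (1 / 2) * (∫ x in (0:ℝ)..1, ‖u x‖ ^ 4)
    + κ * (∫ x in (0:ℝ)..1, ‖u x‖ ^ 2) ^ 3 + κ * (∫ x in (0:ℝ)..1, ‖u x‖ ^ 2) ^ 9

/-- The Foias–Prodi functional
`J(u₁,u₂) = ‖u₁' − u₂'‖₂² − Re ∫ u₁ u₂ (conj u₁ − conj u₂)²
            + κ₂ (Φ(u₁) + Φ(u₂)) ‖u₁ − u₂‖₂²`. -/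
noncomputable def Jfun (κ κ₂ : ℝ) (u₁ u₁' u₂ u₂' : ℝ → ℂ) : ℝ :=
  (∫ x in (0:ℝ)..1, ‖u₁' x - u₂' x‖ ^ 2)
    - (∫ x in (0:ℝ)..1,
        u₁ x * u₂ x * ((starRingEnd ℂ) (u₁ x) - (starRingEnd ℂ) (u₂ x)) ^ 2).re
    + κ₂ * (Phi κ u₁ u₁' + Phi κ u₂ u₂') * (∫ x in (0:ℝ)..1, ‖u₁ x - u₂ x‖ ^ 2)

lemma adm_sup (u u' : ℝ → ℂ) (h : Admissible u u') (x : ℝ) (hx : x ∈ Set.Icc (0:ℝ) 1) :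
    ‖u x‖ ^ 2 ≤ ∫ t in (0:ℝ)..1, ‖u' t‖ ^ 2 := by
  obtain ⟨hd, hc, h0, -⟩ := h
  have hu : Set.uIcc (0:ℝ) 1 = Set.Icc 0 1 := Set.uIcc_of_le zero_le_one
  have hux : Set.uIcc (0:ℝ) x = Set.Icc 0 x := Set.uIcc_of_le hx.1
  have hsub : Set.Icc (0:ℝ) x ⊆ Set.Icc 0 1 := Set.Icc_subset_Icc le_rfl hx.2
  have hi : IntervalIntegrable (fun t => ‖u' t‖) volume 0 1 := by
    apply ContinuousOn.intervalIntegrable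
    rw [hu]; exact hc.norm
  have hi2 : IntervalIntegrable (fun t => ‖u' t‖ ^ 2) volume 0 1 := by
    apply ContinuousOn.intervalIntegrable
    rw [hu]; exact hc.norm.pow 2
  have hftc : ∫ t in (0:ℝ)..x, u' t = u x - u 0 := by
    apply integral_eq_sub_of_hasDerivAt
    · intro t ht
      rw [hux] at ht
      exact hd t (hsub ht)
    · apply ContinuousOn.intervalIntegrable
      rw [hux]; exact hc.mono hsub
  set M := ∫ t in (0:ℝ)..1, ‖u' t‖ with hM
  have h1 : ‖u x‖ ≤ M := by
    have e : u x = ∫ t in (0:ℝ)..x, u' t := by rw [hftc, h0, sub_zero]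
    rw [e]
    refine (intervalIntegral.norm_integral_le_integral_norm hx.1).trans ?_
    exact integral_mono_interval le_rfl hx.1 hx.2
      (Filter.Eventually.of_forall fun t => norm_nonneg _) hi
  have h2 : 0 ≤ ∫ t in (0:ℝ)..1, (‖u' t‖ - M) ^ 2 :=
    integral_nonneg zero_le_one fun t _ => sq_nonneg _
  have h3 : ∫ t in (0:ℝ)..1, (‖u' t‖ - M) ^ 2
      = (∫ t in (0:ℝ)..1, ‖u' t‖ ^ 2) - 2 * M * M + M ^ 2 := by
    have e : (fun t => (‖u' t‖ - M) ^ 2)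
        = fun t => (‖u' t‖ ^ 2 - 2 * M * ‖u' t‖) + M ^ 2 := by
      funext t; ring
    rw [e, integral_add (hi2.sub (hi.const_mul _)) intervalIntegrable_const,
      integral_sub hi2 (hi.const_mul _), intervalIntegral.integral_const_mul]
    simp [← hM]
  have h4 : ‖u x‖ ^ 2 ≤ M ^ 2 := pow_le_pow_left₀ (norm_nonneg _) h1 2
  nlinarith

lemma adm_cont (u u' : ℝ → ℂ) (h : Admissible u u') : ContinuousOn u (Set.Icc (0:ℝ) 1) :=
  fun x hx => (h.1 x hx).continuousAt.continuousWithinAt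

/-- There is `κ₂ > 0` so that
`J(u₁,u₂) ≥ ‖u₁' − u₂'‖₂² + (1/2) κ₂ (Φ(u₁) + Φ(u₂)) ‖u₁ − u₂‖₂²`
for all admissible `u₁, u₂`. -/
theorem Jfun_lower_bound (κ : ℝ) (hκ : 0 < κ)
    (hGN : ∀ u u' : ℝ → ℂ, Admissible u u' →
      (∫ x in (0:ℝ)..1, ‖u x‖ ^ 4) ≤
        (1 / 4) * (∫ x in (0:ℝ)..1, ‖u' x‖ ^ 2) +
          (κ / 2) * (∫ x in (0:ℝ)..1, ‖u x‖ ^ 2) ^ 3) :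
    ∃ κ₂ : ℝ, 0 < κ₂ ∧
      ∀ u₁ u₁' u₂ u₂' : ℝ → ℂ, Admissible u₁ u₁' → Admissible u₂ u₂' →
        (∫ x in (0:ℝ)..1, ‖u₁' x - u₂' x‖ ^ 2)
            + (1 / 2) * κ₂ * (Phi κ u₁ u₁' + Phi κ u₂ u₂') *
                (∫ x in (0:ℝ)..1, ‖u₁ x - u₂ x‖ ^ 2)
          ≤ Jfun κ κ₂ u₁ u₁' u₂ u₂' := by
  have hPhi : ∀ u u' : ℝ → ℂ, Admissible u u' →
      (1 / 2) * (∫ x in (0:ℝ)..1, ‖u' x‖ ^ 2) ≤ Phi κ u u' := by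
    intro u u' h
    have h1 := hGN u u' h
    have hA : 0 ≤ ∫ x in (0:ℝ)..1, ‖u' x‖ ^ 2 :=
      integral_nonneg zero_le_one fun t _ => sq_nonneg _
    have hB : 0 ≤ ∫ x in (0:ℝ)..1, ‖u x‖ ^ 2 :=
      integral_nonneg zero_le_one fun t _ => sq_nonneg _
    have h3 := mul_nonneg hκ.le (pow_nonneg hB 3)
    have h9 := mul_nonneg hκ.le (pow_nonneg hB 9)
    unfold Phi
    linarith
  refine ⟨2, two_pos, ?_⟩
  intro u₁ u₁' u₂ u₂' h₁ h₂
  have hP₁ := hPhi _ _ h₁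
  have hP₂ := hPhi _ _ h₂
  have hW : 0 ≤ ∫ x in (0:ℝ)..1, ‖u₁ x - u₂ x‖ ^ 2 :=
    integral_nonneg zero_le_one fun t _ => sq_nonneg _
  have hc₁ := adm_cont _ _ h₁
  have hc₂ := adm_cont _ _ h₂
  have hu : Set.uIcc (0:ℝ) 1 = Set.Icc 0 1 := Set.uIcc_of_le zero_le_one
  have hs₁ := adm_sup _ _ h₁
  have hs₂ := adm_sup _ _ h₂
  unfold Jfun
  set A₁ := ∫ x in (0:ℝ)..1, ‖u₁' x‖ ^ 2
  set A₂ := ∫ x in (0:ℝ)..1, ‖u₂' x‖ ^ 2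
  have key : (∫ x in (0:ℝ)..1,
        u₁ x * u₂ x * ((starRingEnd ℂ) (u₁ x) - (starRingEnd ℂ) (u₂ x)) ^ 2).re
      ≤ ((1 / 2) * (A₁ + A₂)) * ∫ x in (0:ℝ)..1, ‖u₁ x - u₂ x‖ ^ 2 := by
    refine (Complex.re_le_norm _).trans ?_
    rw [← intervalIntegral.integral_const_mul]
    apply intervalIntegral.norm_integral_le_of_norm_le zero_le_one
    · refine Filter.Eventually.of_forall fun x hx => ?_
      have hx' : x ∈ Set.Icc (0:ℝ) 1 := ⟨hx.1.le, hx.2⟩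
      have a₁ := hs₁ x hx'
      have a₂ := hs₂ x hx'
      rw [norm_mul, norm_mul, norm_pow, ← map_sub, RCLike.norm_conj]
      apply mul_le_mul_of_nonneg_right _ (sq_nonneg _)
      nlinarith [sq_nonneg (‖u₁ x‖ - ‖u₂ x‖)]
    · apply ContinuousOn.intervalIntegrable
      rw [hu]
      exact continuousOn_const.mul ((hc₁.sub hc₂).norm.pow 2)
  have h5 := mul_le_mul_of_nonneg_right (add_le_add hP₁ hP₂) hW
  linarith
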